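/- There exists a universal constant C > 0 such that the following holds. Suppose θ* ∈ M and θ* = (θ*_{ij}) satisfies θ*_{ij} = θ*_i for some nondecreasing vector θ* = (θ*_1,…,θ*_{n1}) ∈ C_{n1} and all i, j (i.e., θ* is constant along each row). Then the isotonic least squares estimator satisfies R(θ*, θ̂) ≤ inf over nondecreasing vectors θ ∈ C_{n1} of { ||θ* − θ||²/n1 + C·k(θ)·σ²·(log n)⁸ / n }, where k(θ) is the number of distinct constant pieces of the vector θ. -/

import Mathlib

open MeasureTheory ProbabilityTheory

noncomputable section

/-- The set of isotonic (coordinatewise nondecreasing) `n1 × n2` matrices. -/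
def Isotonic {n1 n2 : ℕ} (θ : Fin n1 → Fin n2 → ℝ) : Prop :=
  ∀ ⦃i k : Fin n1⦄ ⦃j l : Fin n2⦄, i ≤ k → j ≤ l → θ i j ≤ θ k l

/-- Squared Frobenius norm of a matrix. -/
def frobSq {n1 n2 : ℕ} (θ : Fin n1 → Fin n2 → ℝ) : ℝ :=
  ∑ i, ∑ j, θ i j ^ 2

/-- The law of an `n1 × n2` matrix with i.i.d. `N(0, σ²)` entries. -/
def noiseMeasure (n1 n2 : ℕ) (σ : ℝ) : Measure (Fin n1 → Fin n2 → ℝ) :=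
  Measure.pi fun _ => Measure.pi fun _ => gaussianReal 0 ⟨σ ^ 2, sq_nonneg σ⟩

/-- `lse` is the least squares estimator: for every data matrix `y`, `lse y` minimizes
the squared Frobenius distance to `y` over the cone of isotonic matrices. -/
def IsLSE {n1 n2 : ℕ} (lse : (Fin n1 → Fin n2 → ℝ) → Fin n1 → Fin n2 → ℝ) : Prop :=
  ∀ y, Isotonic (lse y) ∧ ∀ θ, Isotonic θ → frobSq (y - lse y) ≤ frobSq (y - θ)

/-- The risk `R(θ*, est) = E ‖est(θ* + ε) − θ*‖² / n`, where `ε` has i.i.d. `N(0,σ²)`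
entries and `n = n1 n2`. -/
def risk {n1 n2 : ℕ} (σ : ℝ) (θstar : Fin n1 → Fin n2 → ℝ)
    (est : (Fin n1 → Fin n2 → ℝ) → Fin n1 → Fin n2 → ℝ) : ℝ :=
  (∫ ε, frobSq (est (θstar + ε) - θstar) ∂noiseMeasure n1 n2 σ) / (n1 * n2)

/-- The number of distinct values of a vector. -/
def kVec {m : ℕ} (θ : Fin m → ℝ) : ℕ := (Finset.image θ Finset.univ).card

/-! The estimator `θ̂` is the projection of `θ* + ε` onto a convex cone, so for every isotonic `u`
`‖θ̂ - θ*‖² ≤ ‖θ* - u‖² + ∑ (2 ε (θ̂ - u) - (θ̂ - u)²)`. Let `u` have constant rows given by `θ`.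
On each of the `k(θ)` blocks of rows where `θ` is constant, `θ̂ - u` is isotonic. The superlevel
sets of its positive part are upper sets and those of its negative part are lower sets, that is,
Young diagrams. If `|∑ ε| ≤ G √(number of cells)` on every rectangle, a dyadic decomposition gives
the same bound on every Young diagram up to a factor `log² n`, and integrating over the superlevel
sets gives `|∑ ε x| ≲ G log³ n ‖x‖` for the positive and the negative part `x`. Each block
therefore contributes at most a multiple of `G² log⁶ n`, and the smallest possible `G` satisfies
`E G² ≲ σ² log² n`, by a maximal inequality over the at most `n²` rectangles. -/

section IccSums

open Finset

/-- The values `e` satisfy `|∑ e| ≤ G √(number of cells)` over every interval of the order. For a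
product order the intervals are the rectangles, and `G` plays the role of a noise level. -/
def IccSumBound {γ : Type*} [Preorder γ] [LocallyFiniteOrder γ] (G : ℝ) (e : γ → ℝ) : Prop :=
  ∀ p q, |∑ x ∈ Icc p q, e x| ≤ G * √(#(Icc p q))

lemma IccSumBound.neg {γ : Type*} [Preorder γ] [LocallyFiniteOrder γ] {G : ℝ} {e : γ → ℝ}
    (he : IccSumBound G e) : IccSumBound G (-e) := fun p q => by
  simpa only [Pi.neg_apply, sum_neg_distrib, abs_neg] using he p q

lemma IccSumBound.comp {γ δ : Type*} [Preorder γ] [LocallyFiniteOrder γ] [Preorder δ]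
    [LocallyFiniteOrder δ] {G : ℝ} {e : γ → ℝ} (he : IccSumBound G e) (f : δ ↪ γ)
    (hf : ∀ p q, ∃ p' q', (Icc p q).map f = Icc p' q') : IccSumBound G (e ∘ f) := fun p q => by
  obtain ⟨p', q', h⟩ := hf p q
  simpa only [← h, sum_map, card_map, Function.comp_apply] using he p' q'

variable {α β : Type*} [Preorder α] [LocallyFiniteOrder α] [DecidableLE α] [Preorder β]
  [LocallyFiniteOrder β] [DecidableLE β]
  {G : ℝ} {e : α × β → ℝ}

lemma IccSumBound.orderDual (he : IccSumBound G e) :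
    IccSumBound G fun p : αᵒᵈ × βᵒᵈ => e (OrderDual.ofDual p.1, OrderDual.ofDual p.2) := by
  refine he.comp (OrderDual.ofDual.prodCongr OrderDual.ofDual).toEmbedding fun p q =>
    ⟨(OrderDual.ofDual q.1, OrderDual.ofDual q.2), (OrderDual.ofDual p.1, OrderDual.ofDual p.2), ?_⟩
  ext x
  simp only [mem_map_equiv, mem_Icc, Prod.le_def]
  exact and_comm

lemma IccSumBound.subtype_fst {P : α → Prop} [DecidablePred P] (hP : Set.OrdConnected {a | P a})
    (he : IccSumBound G e) : IccSumBound G fun p : {a // P a} × β => e (p.1, p.2) := by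
  refine he.comp ((Function.Embedding.subtype P).prodMap (.refl β)) fun p q =>
    ⟨(p.1, p.2), (q.1, q.2), ?_⟩
  rw [Icc_prod_def, Icc_prod_def, prodMap_map_product, map_refl,
    map_subtype_embedding_Icc P _ _ fun _ _ _ hax hxb ha hb => hP.out ha hb ⟨hax, hxb⟩]

end IccSums

section YoungDiagrams

open Finset

lemma sqrt_add_sqrt_le_sqrt_two_mul {x y : ℝ} (hx : 0 ≤ x) (hy : 0 ≤ y) :
    √x + √y ≤ √(2 * (x + y)) := by
  refine Real.le_sqrt_of_sq_le (add_sq_le.trans_eq ?_)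
  rw [Real.sq_sqrt hx, Real.sq_sqrt hy]

lemma mul_sqrt_add_mul_sqrt_add_le {A B x y : ℝ} (hA : 0 ≤ A) (hB : 0 ≤ B) (hx : 0 ≤ x)
    (hy : 0 ≤ y) : A * √y + B * √x + B * √y ≤ (A + B) * √(2 * (x + y)) := by
  have hmono : √y ≤ √(2 * (x + y)) := Real.sqrt_le_sqrt (by linarith)
  calc A * √y + B * √x + B * √y = A * √y + B * (√x + √y) := by ring
    _ ≤ A * √(2 * (x + y)) + B * √(2 * (x + y)) := by
      gcongr
      exact sqrt_add_sqrt_le_sqrt_two_mul hx hy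
    _ = (A + B) * √(2 * (x + y)) := by ring

lemma sum_cells_eq_sum_range_rowLen {M : Type*} [AddCommMonoid M] (μ : YoungDiagram) {m : ℕ}
    (hm : ∀ p ∈ μ, p.1 < m) (f : ℕ × ℕ → M) :
    ∑ p ∈ μ.cells, f p = ∑ i ∈ range m, ∑ j ∈ range (μ.rowLen i), f (i, j) := by
  refine sum_finset_product _ _ _ fun p => ?_
  rw [YoungDiagram.mem_cells, mem_range, mem_range, ← YoungDiagram.mem_iff_lt_rowLen]
  exact ⟨fun hp => ⟨hm p hp, hp⟩, And.right⟩

variable {μ : YoungDiagram} {G : ℝ} {e : ℕ × ℕ → ℝ}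

lemma abs_sum_Ico_sum_Ico_le
    (he : ∀ p, ∀ q ∈ μ, |∑ x ∈ Icc p q, e x| ≤ G * √(#(Icc p q))) {i₀ i₁ b c : ℕ}
    (hi : i₀ < i₁) (hbc : b ≤ c) (hc : c ≤ μ.rowLen (i₁ - 1)) :
    |∑ i ∈ Ico i₀ i₁, ∑ j ∈ Ico b c, e (i, j)| ≤ G * √(((i₁ : ℝ) - i₀) * (c - b)) := by
  obtain rfl | hbc' := hbc.eq_or_lt
  · simp
  have h := he (i₀, b) (i₁ - 1, c - 1) (YoungDiagram.mem_iff_lt_rowLen.2 (by omega))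
  have hrow : Icc i₀ (i₁ - 1) = Ico i₀ i₁ := by ext; simp only [mem_Icc, mem_Ico]; omega
  have hcol : Icc b (c - 1) = Ico b c := by ext; simp only [mem_Icc, mem_Ico]; omega
  rwa [Icc_prod_def, hrow, hcol, sum_product, card_product, Nat.card_Ico, Nat.card_Ico,
    Nat.cast_mul, Nat.cast_sub hi.le, Nat.cast_sub hbc] at h

/- Halving the block at its middle row `mid`: with `c = μ.rowLen mid`, the rows from `mid` on form a
diagram of width `c - b`, the rows before it a rectangle of that width followed by a diagram of
width `μ.rowLen i₀ - c`. Both diagrams have half the rows, and their widths add up to the original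
one. -/
lemma abs_sum_block_le (hG : 0 ≤ G)
    (he : ∀ p, ∀ q ∈ μ, |∑ x ∈ Icc p q, e x| ≤ G * √(#(Icc p q))) (a i₀ b : ℕ)
    (hb : ∀ i < i₀ + 2 ^ a, b ≤ μ.rowLen i) :
    |∑ i ∈ Ico i₀ (i₀ + 2 ^ a), ∑ j ∈ Ico b (μ.rowLen i), e (i, j)| ≤
      G * (a + 1) * √(2 ^ a * (μ.rowLen i₀ - b)) := by
  induction a generalizing i₀ b with
  | zero => simpa using abs_sum_Ico_sum_Ico_le he i₀.lt_succ_self (hb i₀ (by simp)) le_rfl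
  | succ a ih =>
    have hpos : 0 < 2 ^ a := by positivity
    set mid := i₀ + 2 ^ a with hmid
    have hend : i₀ + 2 ^ (a + 1) = mid + 2 ^ a := by omega
    set c := μ.rowLen mid
    have hbc : b ≤ c := hb mid (by omega)
    have hc : ∀ i ≤ mid, c ≤ μ.rowLen i := fun i => μ.rowLen_anti i mid
    have hsplit : ∑ i ∈ Ico i₀ mid, ∑ j ∈ Ico b (μ.rowLen i), e (i, j) =
        ∑ i ∈ Ico i₀ mid, ∑ j ∈ Ico b c, e (i, j) +
          ∑ i ∈ Ico i₀ mid, ∑ j ∈ Ico c (μ.rowLen i), e (i, j) := by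
      rw [← sum_add_distrib]
      exact sum_congr rfl fun i hi =>
        (sum_Ico_consecutive _ hbc (hc i (mem_Ico.1 hi).2.le)).symm
    rw [hend, ← sum_Ico_consecutive _ (show i₀ ≤ mid by omega) (show mid ≤ mid + 2 ^ a by omega),
      hsplit]
    set X : ℝ := μ.rowLen i₀ - c
    set Y : ℝ := c - b
    have hX0 : 0 ≤ X := sub_nonneg.2 (Nat.cast_le.2 (hc i₀ (by omega)))
    have hY0 : 0 ≤ Y := sub_nonneg.2 (Nat.cast_le.2 hbc)
    have hrect : |∑ i ∈ Ico i₀ mid, ∑ j ∈ Ico b c, e (i, j)| ≤ G * √(2 ^ a * Y) := by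
      simpa [hmid] using
        abs_sum_Ico_sum_Ico_le he (show i₀ < mid by omega) hbc (hc (mid - 1) (by omega))
    have hupper := ih i₀ c fun i hi => hc i hi.le
    have hlower := ih mid b fun i hi => hb i (by omega)
    have hwidth : (2 : ℝ) ^ (a + 1) * (μ.rowLen i₀ - b) = 2 * (2 ^ a * X + 2 ^ a * Y) := by ring
    calc _ ≤ G * √(2 ^ a * Y) + G * (a + 1) * √(2 ^ a * X) + G * (a + 1) * √(2 ^ a * Y) :=
          (abs_add_le _ _).trans (add_le_add ((abs_add_le _ _).trans (add_le_add hrect hupper))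
            hlower)
      _ ≤ (G + G * (a + 1)) * √(2 * (2 ^ a * X + 2 ^ a * Y)) :=
          mul_sqrt_add_mul_sqrt_add_le hG (by positivity) (by positivity) (by positivity)
      _ = G * ((a + 1 : ℕ) + 1) * √(2 ^ (a + 1) * (μ.rowLen i₀ - b)) := by
          rw [hwidth]
          push_cast
          ring

lemma succ_mul_rowLen_le_card (μ : YoungDiagram) (i : ℕ) : (i + 1) * μ.rowLen i ≤ μ.card := by
  have hsub : range (i + 1) ×ˢ range (μ.rowLen i) ⊆ μ.cells := fun p hp => by
    rw [mem_product, mem_range, mem_range, ← YoungDiagram.mem_iff_lt_rowLen] at hp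
    exact μ.isLowerSet (Prod.mk_le_mk.2 ⟨Nat.lt_succ_iff.1 hp.1, le_rfl⟩) hp.2
  simpa using card_le_card hsub

/- The rows are grouped into the dyadic blocks `[2 ^ a - 1, 2 ^ (a + 1) - 1)`. -/
lemma abs_sum_cells_le (hG : 0 ≤ G)
    (he : ∀ p, ∀ q ∈ μ, |∑ x ∈ Icc p q, e x| ≤ G * √(#(Icc p q))) {L : ℕ}
    (hL : ∀ p ∈ μ, p.1 + 1 < 2 ^ L) :
    |∑ p ∈ μ.cells, e p| ≤ G * L ^ 2 * √μ.card := by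
  have hblock (a : ℕ) : |∑ i ∈ Ico (2 ^ a - 1) (2 ^ a - 1 + 2 ^ a),
      ∑ j ∈ range (μ.rowLen i), e (i, j)| ≤ G * (a + 1) * √μ.card := by
    have hwide : (2 : ℝ) ^ a * μ.rowLen (2 ^ a - 1) ≤ μ.card := by
      have h := succ_mul_rowLen_le_card μ (2 ^ a - 1)
      rw [Nat.sub_add_cancel Nat.one_le_two_pow] at h
      exact_mod_cast h
    have h := abs_sum_block_le hG he a (2 ^ a - 1) 0 fun _ _ => Nat.zero_le _
    rw [Nat.cast_zero, sub_zero] at h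
    simp only [Nat.Ico_zero_eq_range] at h
    exact h.trans (by gcongr)
  have hpeel (K : ℕ) : |∑ i ∈ range (2 ^ K - 1), ∑ j ∈ range (μ.rowLen i), e (i, j)| ≤
      G * K ^ 2 * √μ.card := by
    induction K with
    | zero => simp
    | succ K ih =>
      have hend : 2 ^ (K + 1) - 1 = 2 ^ K - 1 + 2 ^ K := by
        have := Nat.one_le_two_pow (n := K)
        omega
      rw [hend, ← sum_range_add_sum_Ico _ (Nat.le_add_right _ _)]
      calc _ ≤ G * K ^ 2 * √μ.card + G * (K + 1) * √μ.card :=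
            (abs_add_le _ _).trans (add_le_add ih (hblock K))
        _ ≤ G * (K + 1 : ℕ) ^ 2 * √μ.card := by
          have : 0 ≤ G * √μ.card * K := by positivity
          push_cast
          linarith
  rw [sum_cells_eq_sum_range_rowLen μ fun p hp => Nat.lt_sub_iff_add_lt.2 (hL p hp)]
  exact hpeel L

end YoungDiagrams

section LowerSets

open Finset

variable {G : ℝ} {L : ℕ}

lemma IccSumBound.abs_sum_le_of_orderEmbedding {γ : Type*} [PartialOrder γ] [LocallyFiniteOrder γ]
    {e : γ → ℝ} (hG : 0 ≤ G) (he : IccSumBound G e) (φ : γ ↪o ℕ × ℕ)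
    (hφ : IsLowerSet (Set.range φ)) (hL : ∀ p, (φ p).1 + 1 < 2 ^ L) {S : Finset γ}
    (hS : IsLowerSet (S : Set γ)) :
    |∑ p ∈ S, e p| ≤ G * L ^ 2 * √(#S) := by
  let μ : YoungDiagram := ⟨S.map φ.toEmbedding, fun x y hy hx => by
    obtain ⟨p, hp, rfl⟩ := mem_map.1 (mem_coe.1 hx)
    obtain ⟨q, rfl⟩ := hφ hy ⟨p, rfl⟩
    exact mem_coe.2 (mem_map_of_mem _ (hS (φ.le_iff_le.1 hy) hp))⟩
  have hμ {x : ℕ × ℕ} (hx : x ∈ μ) : ∃ p, φ p = x := by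
    obtain ⟨p, -, hp⟩ := mem_map.1 hx
    exact ⟨p, hp⟩
  have hIcc (p q : γ) : Icc (φ p) (φ q) = (Icc p q).map φ.toEmbedding := by
    rw [← coe_inj, coe_map, coe_Icc, coe_Icc]
    exact (φ.image_Icc hφ.ordConnected p q).symm
  have he' : ∀ x, ∀ y ∈ μ, |∑ z ∈ Icc x y, Function.extend φ e 0 z| ≤ G * √(#(Icc x y)) := by
    intro x y hy
    obtain ⟨q, rfl⟩ := hμ hy
    by_cases hx : x ≤ φ q
    · obtain ⟨p, rfl⟩ := hφ hx ⟨q, rfl⟩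
      simpa [hIcc, φ.injective.extend_apply] using he p q
    · simp [Icc_eq_empty hx]
  have hrows : ∀ x ∈ μ, x.1 + 1 < 2 ^ L := by
    intro x hx
    obtain ⟨p, rfl⟩ := hμ hx
    exact hL p
  simpa [μ, YoungDiagram.card, φ.injective.extend_apply] using abs_sum_cells_le hG he' hrows

lemma exists_orderEmbedding_nat_range_eq_Iio (α : Type*) [LinearOrder α] [Fintype α] :
    ∃ f : α ↪o ℕ, Set.range f = Set.Iio (Fintype.card α) := by
  let ψ := (Fintype.orderIsoFinOfCardEq α rfl).symm
  exact ⟨ψ.toOrderEmbedding.trans (Fin.valOrderEmb _),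
    (EquivLike.range_comp Fin.val ψ).trans Fin.range_val⟩

lemma exists_orderEmbedding_nat_prod_nat (α β : Type*) [LinearOrder α] [Fintype α] [LinearOrder β]
    [Fintype β] : ∃ φ : α × β ↪o ℕ × ℕ,
      Set.range φ = Set.Iio (Fintype.card α) ×ˢ Set.Iio (Fintype.card β) := by
  obtain ⟨f, hf⟩ := exists_orderEmbedding_nat_range_eq_Iio α
  obtain ⟨g, hg⟩ := exists_orderEmbedding_nat_range_eq_Iio β
  refine ⟨.ofMapLEIff (Prod.map f g) fun p q => by simp [Prod.le_def], ?_⟩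
  rw [OrderEmbedding.coe_ofMapLEIff, Set.range_prodMap, hf, hg]

lemma IccSumBound.abs_sum_le_of_isLowerSet {α β : Type*} [LinearOrder α] [Fintype α]
    [LocallyFiniteOrder α] [LinearOrder β] [Finite β] [LocallyFiniteOrder β] {e : α × β → ℝ}
    (hG : 0 ≤ G) (he : IccSumBound G e) (hL : Fintype.card α < 2 ^ L) {S : Finset (α × β)}
    (hS : IsLowerSet (S : Set (α × β))) :
    |∑ p ∈ S, e p| ≤ G * L ^ 2 * √(#S) := by
  have := Fintype.ofFinite β
  obtain ⟨φ, hφ⟩ := exists_orderEmbedding_nat_prod_nat α β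
  refine he.abs_sum_le_of_orderEmbedding hG φ
    (hφ ▸ (isLowerSet_Iio _).prod (isLowerSet_Iio _)) (fun p => ?_) hS
  have hp : φ p ∈ Set.Iio (Fintype.card α) ×ˢ Set.Iio (Fintype.card β) := hφ ▸ Set.mem_range_self p
  exact (Nat.succ_le_iff.2 hp.1).trans_lt hL

end LowerSets

section LayerCake

open Finset

variable {γ : Type*} [Fintype γ] {x e : γ → ℝ} {r A N : ℝ}

lemma sum_mul_eq_integral_sum_superlevel (hx0 : ∀ p, 0 ≤ x p) (hxr : ∀ p, x p ≤ r) :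
    ∑ p, e p * x p = ∫ t in 0..r, ∑ p with t ≤ x p, e p := by
  have hind (t : ℝ) : ∑ p with t ≤ x p, e p =
      ∑ p, Set.indicator {s | s ≤ x p} (fun _ => e p) t := by
    simp only [sum_filter, Set.indicator_apply, Set.mem_ofPred_eq]
  simp only [hind]
  have hint (p : γ) :
      IntervalIntegrable (Set.indicator {s | s ≤ x p} fun _ => e p) volume 0 r :=
    intervalIntegrable_const.imp (·.indicator measurableSet_Iic) (·.indicator measurableSet_Iic)
  rw [intervalIntegral.integral_finsetSum fun p _ => hint p]
  refine sum_congr rfl fun p _ => ?_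
  rw [intervalIntegral.integral_indicator ⟨hx0 p, hxr p⟩, intervalIntegral.integral_const,
    sub_zero, smul_eq_mul, mul_comm]

lemma sqrt_card_superlevel_mul_le (x : γ → ℝ) {t : ℝ} (ht : 0 ≤ t) :
    √(#{p | t ≤ x p}) * t ≤ √(∑ p, x p ^ 2) := by
  refine Real.le_sqrt_of_sq_le ?_
  rw [mul_pow, Real.sq_sqrt (Nat.cast_nonneg _), ← nsmul_eq_mul]
  calc #{p | t ≤ x p} • t ^ 2 ≤ ∑ p with t ≤ x p, x p ^ 2 :=
        card_nsmul_le_sum _ _ _ fun p hp => by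
          have := (mem_filter.1 hp).2
          gcongr
    _ ≤ ∑ p, x p ^ 2 :=
        sum_le_sum_of_subset_of_nonneg (filter_subset _ _) fun _ _ _ => sq_nonneg _

lemma integral_const_div_add (c : ℝ) {δ : ℝ} (hδ : 0 < δ) (hr : 0 ≤ r) :
    ∫ t in 0..r, c / (t + δ) = c * Real.log ((r + δ) / δ) := by
  rw [intervalIntegral.integral_comp_add_right (fun t => c / t)]
  simp only [div_eq_mul_one_div c]
  rw [intervalIntegral.integral_const_mul, integral_one_div_of_pos (by linarith) (by linarith),
    zero_add]

lemma sqrt_card_superlevel_le (x : γ → ℝ) (hN : Fintype.card γ ≤ N) (hN0 : 0 < N)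
    (hr : 0 < √(∑ p, x p ^ 2)) {t : ℝ} (ht : 0 ≤ t) :
    √(#{p | t ≤ x p}) ≤ 2 * √(∑ p, x p ^ 2) / (t + √(∑ p, x p ^ 2) / √N) := by
  have hcard : √(#{p | t ≤ x p}) / √N ≤ 1 :=
    div_le_one_of_le₀ (Real.sqrt_le_sqrt ((Nat.cast_le.2 (card_le_univ _)).trans hN))
      (Real.sqrt_nonneg _)
  rw [le_div_iff₀ (by positivity), mul_add, mul_div_left_comm, two_mul]
  exact add_le_add (sqrt_card_superlevel_mul_le x ht) (mul_le_of_le_one_right hr.le hcard)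

lemma abs_sum_mul_le_of_abs_sum_superlevel_le (hx : ∀ p, 0 ≤ x p) (hA : 0 ≤ A)
    (hN : Fintype.card γ ≤ N) (hN0 : 0 < N)
    (h : ∀ t, |∑ p with t ≤ x p, e p| ≤ A * √(#{p | t ≤ x p})) :
    |∑ p, e p * x p| ≤ A * (2 * Real.log (1 + √N)) * √(∑ p, x p ^ 2) := by
  set r := √(∑ p, x p ^ 2)
  have hxr (p : γ) : x p ≤ r :=
    Real.le_sqrt_of_sq_le
      (single_le_sum (f := fun p => x p ^ 2) (fun _ _ => sq_nonneg _) (mem_univ p))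
  have hr0 : 0 ≤ r := Real.sqrt_nonneg _
  obtain hr | hr := hr0.eq_or_lt
  · have hx0 (p : γ) : x p = 0 := le_antisymm ((hxr p).trans_eq hr.symm) (hx p)
    simp [r, hx0]
  have hpoint (t : ℝ) (ht : 0 < t) :
      ‖∑ p with t ≤ x p, e p‖ ≤ A * (2 * r) / (t + r / √N) := by
    rw [mul_div_assoc]
    exact (h t).trans (mul_le_mul_of_nonneg_left (sqrt_card_superlevel_le x hN hN0 hr ht.le) hA)
  have hδ : 0 < r / √N := by positivity
  rw [sum_mul_eq_integral_sum_superlevel hx hxr]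
  refine (intervalIntegral.norm_integral_le_of_norm_le hr.le
    (Filter.Eventually.of_forall fun t ht => hpoint t ht.1) ?_).trans_eq ?_
  · refine ContinuousOn.intervalIntegrable fun t ht => ?_
    rw [Set.uIcc_of_le hr.le] at ht
    have : t + r / √N ≠ 0 := by linarith [ht.1]
    fun_prop (disch := assumption)
  · have hratio : (r + r / √N) / (r / √N) = 1 + √N := by
      field_simp
      ring
    rw [integral_const_div_add _ hδ hr.le, hratio]
    ring

end LayerCake

section IsotonicQuadraticForm

open Finset

lemma sum_two_mul_sub_sq_le_sq {γ : Type*} [Fintype γ] {e x : γ → ℝ} {B : ℝ}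
    (h : |∑ p, e p * x p| ≤ B * √(∑ p, x p ^ 2)) :
    ∑ p, (2 * e p * x p - x p ^ 2) ≤ B ^ 2 := by
  have hsq := Real.sq_sqrt (sum_nonneg fun p _ => sq_nonneg (x p) : 0 ≤ ∑ p, x p ^ 2)
  have hsq_sub := sq_nonneg (B - √(∑ p, x p ^ 2))
  simp only [sum_sub_distrib, mul_assoc, ← mul_sum]
  linarith [le_of_abs_le h]

variable {α β : Type*} [LinearOrder α] [Fintype α] [LocallyFiniteOrder α] [LinearOrder β]
  [Fintype β] [LocallyFiniteOrder β] {G N : ℝ} {L : ℕ} {e : α × β → ℝ}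

lemma IccSumBound.sum_two_mul_sub_sq_le_of_antitone (he : IccSumBound G e) (hG : 0 ≤ G)
    (hL : Fintype.card α < 2 ^ L) (hN : Fintype.card (α × β) ≤ N) (hN0 : 0 < N)
    {x : α × β → ℝ} (hx : Antitone x) (hx0 : ∀ p, 0 ≤ x p) :
    ∑ p, (2 * e p * x p - x p ^ 2) ≤ (G * L ^ 2 * (2 * Real.log (1 + √N))) ^ 2 := by
  refine sum_two_mul_sub_sq_le_sq
    (abs_sum_mul_le_of_abs_sum_superlevel_le hx0 (by positivity) hN hN0 fun t => ?_)
  refine he.abs_sum_le_of_isLowerSet hG hL fun p q hqp hp => ?_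
  rw [coe_filter_univ] at hp ⊢
  exact le_trans (α := ℝ) hp (hx hqp)

lemma IccSumBound.sum_two_mul_sub_sq_le_of_monotone (he : IccSumBound G e) (hG : 0 ≤ G)
    (hL : Fintype.card α < 2 ^ L) (hN : Fintype.card (α × β) ≤ N) (hN0 : 0 < N)
    {v : α × β → ℝ} (hv : Monotone v) :
    ∑ p, (2 * e p * v p - v p ^ 2) ≤ 2 * (G * L ^ 2 * (2 * Real.log (1 + √N))) ^ 2 := by
  have hneg : ∑ p, (2 * -e p * (v p)⁻ - (v p)⁻ ^ 2) ≤ _ :=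
    he.neg.sum_two_mul_sub_sq_le_of_antitone hG hL hN hN0 (x := fun p => (v p)⁻)
      (fun _ _ hpq => negPart_anti (hv hpq)) fun _ => negPart_nonneg _
  let dual : αᵒᵈ × βᵒᵈ ≃ α × β := OrderDual.ofDual.prodCongr OrderDual.ofDual
  have hpos : ∑ p, (2 * e p * (v p)⁺ - (v p)⁺ ^ 2) ≤ _ :=
    (dual.sum_comp _).symm.trans_le <|
      he.orderDual.sum_two_mul_sub_sq_le_of_antitone hG
        ((Fintype.card_orderDual α).trans_lt hL)
        ((Nat.cast_le.2 (Fintype.card_congr dual).le).trans hN) hN0 (x := fun p => (v (dual p))⁺)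
        (fun p q hpq => posPart_mono (hv (show dual q ≤ dual p from hpq))) fun _ => posPart_nonneg _
  have hsplit (p : α × β) : 2 * e p * v p - v p ^ 2 =
      (2 * e p * (v p)⁺ - (v p)⁺ ^ 2) + (2 * -e p * (v p)⁻ - (v p)⁻ ^ 2) := by
    obtain h | h := le_total 0 (v p)
    · rw [posPart_of_nonneg h, negPart_of_nonneg h]
      ring
    · rw [posPart_of_nonpos h, negPart_of_nonpos h]
      ring
  rw [sum_congr rfl fun p _ => hsplit p, sum_add_distrib, two_mul]
  exact add_le_add hpos hneg

/- On a block of rows where `θ` is constant, `η - θ` is isotonic. -/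
lemma IccSumBound.sum_two_mul_sub_sq_le_card_image (he : IccSumBound G e) (hG : 0 ≤ G)
    (hL : Fintype.card α < 2 ^ L) (hN : Fintype.card (α × β) ≤ N) (hN0 : 0 < N)
    {η : α × β → ℝ} (hη : Monotone η) {θ : α → ℝ} (hθ : Monotone θ) :
    ∑ p, (2 * e p * (η p - θ p.1) - (η p - θ p.1) ^ 2) ≤
      #(univ.image θ) * (2 * (G * L ^ 2 * (2 * Real.log (1 + √N))) ^ 2) := by
  rw [Fintype.sum_prod_type, ← sum_fiberwise_of_maps_to (g := θ) (t := univ.image θ)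
    fun i _ => mem_image_of_mem θ (mem_univ i), ← nsmul_eq_mul]
  refine sum_le_card_nsmul _ _ _ fun c _ => ?_
  have hord : Set.OrdConnected {i | θ i = c} := Set.ordConnected_singleton.preimage_mono hθ
  have hcard : Fintype.card {i // θ i = c} ≤ Fintype.card α := Fintype.card_subtype_le _
  have hcard_prod : Fintype.card ({i // θ i = c} × β) ≤ Fintype.card (α × β) := by
    rw [Fintype.card_prod, Fintype.card_prod]
    gcongr
  have hblock := (he.subtype_fst hord).sum_two_mul_sub_sq_le_of_monotone hG (hcard.trans_lt hL)
    ((Nat.cast_le.2 hcard_prod).trans hN) hN0 (v := fun p => η (p.1, p.2) - c)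
    fun p q hpq => sub_le_sub_right (hη hpq) c
  refine le_of_eq_of_le ?_ hblock
  rw [Fintype.sum_prod_type, sum_subtype _ (p := fun i => θ i = c) fun i => by simp]
  exact Fintype.sum_congr _ _ fun i => by simp only [i.2]

end IsotonicQuadraticForm

section NoiseLevel

open Finset

lemma sq_log_le_four_mul {x : ℝ} (hx : 1 ≤ x) : Real.log x ^ 2 ≤ 4 * x := by
  have hlog : Real.log x ≤ 2 * √x := by
    have h := Real.log_le_self (Real.sqrt_nonneg x)
    rw [Real.log_sqrt (by positivity)] at h
    linarith
  calc Real.log x ^ 2 ≤ (2 * √x) ^ 2 := by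
        gcongr
        exact Real.log_nonneg hx
    _ = 4 * x := by
        rw [mul_pow, Real.sq_sqrt (by positivity)]
        norm_num

lemma sq_le_log_card_sq_add_sum_cosh {ι : Type*} [Fintype ι] (z : ι → ℝ) (r : ι) :
    z r ^ 2 ≤ 2 * Real.log (Fintype.card ι) ^ 2 +
      16 * ((∑ s, Real.cosh (z s)) / Fintype.card ι) := by
  set c : ℝ := (Fintype.card ι : ℝ)
  have hc : 0 < c := Nat.cast_pos.2 (Fintype.card_pos_iff.2 ⟨r⟩)
  set A := (∑ s, Real.cosh (z s)) / c
  have hcA : c * A = ∑ s, Real.cosh (z s) := mul_div_cancel₀ _ hc.ne'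
  have hA : 1 ≤ A := by
    rw [one_le_div hc]
    simpa [c] using card_nsmul_le_sum univ _ 1 fun s _ => Real.one_le_cosh (z s)
  have hexp : Real.exp |z r| ≤ c * (2 * A) := by
    have hsum : Real.cosh (z r) ≤ c * A := hcA ▸
      single_le_sum (f := fun s => Real.cosh (z s)) (fun _ _ => (Real.cosh_pos _).le) (mem_univ r)
    rw [← Real.cosh_abs, Real.cosh_eq] at hsum
    linarith [Real.exp_pos (-|z r|)]
  have habs : |z r| ≤ Real.log c + Real.log (2 * A) := by
    rw [← Real.log_mul hc.ne' (by positivity)]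
    exact (Real.le_log_iff_exp_le (by positivity)).2 hexp
  calc z r ^ 2 = |z r| ^ 2 := (sq_abs _).symm
    _ ≤ (Real.log c + Real.log (2 * A)) ^ 2 := by gcongr
    _ ≤ 2 * (Real.log c ^ 2 + Real.log (2 * A) ^ 2) := add_sq_le
    _ ≤ 2 * Real.log c ^ 2 + 16 * A := by
      linarith [sq_log_le_four_mul (show 1 ≤ 2 * A by linarith)]

variable {Ω : Type*} [MeasurableSpace Ω] {P : Measure Ω} {c : NNReal}

lemma integrable_cosh_of_hasSubgaussianMGF {Z : Ω → ℝ} (hZ : HasSubgaussianMGF Z c P) :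
    Integrable (fun ω => Real.cosh (Z ω)) P := by
  simp only [Real.cosh_eq]
  exact (Integrable.add (by simpa using hZ.integrable_exp_mul 1)
    (by simpa using hZ.integrable_exp_mul (-1))).div_const 2

lemma integral_cosh_le_of_hasSubgaussianMGF {Z : Ω → ℝ} (hZ : HasSubgaussianMGF Z c P)
    (hc : c ≤ 1) : ∫ ω, Real.cosh (Z ω) ∂P ≤ 2 := by
  have hmgf : ∫ ω, Real.cosh (Z ω) ∂P = (mgf Z P 1 + mgf Z P (-1)) / 2 := by
    have h := integral_add (hZ.integrable_exp_mul 1) (hZ.integrable_exp_mul (-1))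
    simp only [one_mul, neg_one_mul] at h
    simp only [Real.cosh_eq, mgf, integral_div, one_mul, neg_one_mul, h]
  have hexp : Real.exp (c / 2) ≤ 2 := by
    have hhalf : (c : ℝ) / 2 ≤ Real.log 2 := by
      linarith [Real.log_two_gt_d9, NNReal.coe_le_one.2 hc]
    exact (Real.exp_le_exp.2 hhalf).trans_eq (Real.exp_log two_pos)
  have h₁ := hZ.mgf_le 1
  have h₂ := hZ.mgf_le (-1)
  rw [even_two.neg_pow] at h₂
  rw [one_pow, mul_one] at h₁ h₂
  linarith

lemma iSup_sq_le_log_card_sq_add_sum_cosh {ι : Type*} [Fintype ι] (z : ι → ℝ) :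
    ⨆ r, z r ^ 2 ≤ 2 * Real.log (Fintype.card ι) ^ 2 +
      16 * ((∑ s, Real.cosh (z s)) / Fintype.card ι) := by
  refine Real.iSup_le (sq_le_log_card_sq_add_sum_cosh z) ?_
  have := sum_nonneg fun s (_ : s ∈ univ) => (Real.cosh_pos (z s)).le
  positivity

variable {ι : Type*} {Z : ι → Ω → ℝ} {v : ι → NNReal}

lemma integrable_sum_cosh_of_hasSubgaussianMGF [Fintype ι]
    (hZ : ∀ r, HasSubgaussianMGF (Z r) (v r) P) :
    Integrable (fun ω => (∑ r, Real.cosh (Z r ω)) / Fintype.card ι) P :=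
  (integrable_finsetSum _ fun r _ => integrable_cosh_of_hasSubgaussianMGF (hZ r)).div_const _

lemma integrable_iSup_sq_of_hasSubgaussianMGF [Finite ι] [IsFiniteMeasure P]
    (hZ : ∀ r, HasSubgaussianMGF (Z r) (v r) P) : Integrable (fun ω => ⨆ r, Z r ω ^ 2) P := by
  have := Fintype.ofFinite ι
  refine Integrable.mono' ((integrable_const (2 * Real.log (Fintype.card ι) ^ 2)).add
    ((integrable_sum_cosh_of_hasSubgaussianMGF hZ).const_mul 16))
    (AEMeasurable.iSup fun r => (hZ r).aemeasurable.pow_const 2).aestronglyMeasurable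
    (.of_forall fun ω => ?_)
  rw [Real.norm_of_nonneg (Real.iSup_nonneg fun _ => sq_nonneg _)]
  exact iSup_sq_le_log_card_sq_add_sum_cosh fun r => Z r ω

lemma integral_iSup_sq_le_of_hasSubgaussianMGF [Fintype ι] [IsProbabilityMeasure P]
    (hZ : ∀ r, HasSubgaussianMGF (Z r) (v r) P) (hv : ∀ r, v r ≤ 1) :
    ∫ ω, ⨆ r, Z r ω ^ 2 ∂P ≤ 2 * Real.log (Fintype.card ι) ^ 2 + 32 := by
  have hint := integrable_sum_cosh_of_hasSubgaussianMGF hZ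
  have havg : ∫ ω, (∑ r, Real.cosh (Z r ω)) / Fintype.card ι ∂P ≤ 2 := by
    rw [integral_div, integral_finsetSum _ fun r _ => integrable_cosh_of_hasSubgaussianMGF (hZ r)]
    refine div_le_of_le_mul₀ (Nat.cast_nonneg _) zero_le_two ?_
    rw [mul_comm, ← nsmul_eq_mul]
    exact sum_le_card_nsmul _ _ _ fun r _ => integral_cosh_le_of_hasSubgaussianMGF (hZ r) (hv r)
  calc ∫ ω, ⨆ r, Z r ω ^ 2 ∂P ≤ ∫ ω, (2 * Real.log (Fintype.card ι) ^ 2 +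
          16 * ((∑ r, Real.cosh (Z r ω)) / Fintype.card ι)) ∂P :=
        integral_mono (integrable_iSup_sq_of_hasSubgaussianMGF hZ)
          ((integrable_const _).add (hint.const_mul 16))
          fun ω => iSup_sq_le_log_card_sq_add_sum_cosh fun r => Z r ω
    _ = 2 * Real.log (Fintype.card ι) ^ 2 +
          16 * ∫ ω, (∑ r, Real.cosh (Z r ω)) / Fintype.card ι ∂P := by
        rw [integral_add (integrable_const _) (hint.const_mul 16), integral_const, probReal_univ,
          one_smul, integral_const_mul]
    _ ≤ 2 * Real.log (Fintype.card ι) ^ 2 + 32 := by linarith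

lemma hasSubgaussianMGF_sum_div_sqrt_card {γ : Type*} {X : γ → Ω → ℝ} {c : NNReal}
    (hX : iIndepFun X P) (hc : ∀ x, HasSubgaussianMGF (X x) c P) (S : Finset γ) :
    ∃ v ≤ 1, HasSubgaussianMGF (fun ω => (√(c * #S))⁻¹ * ∑ x ∈ S, X x ω) v P := by
  refine ⟨_, ?_, (HasSubgaussianMGF.sum_of_iIndepFun hX fun x (_ : x ∈ S) => hc x).const_mul _⟩
  change (√(c * #S))⁻¹ ^ 2 * ((∑ _ ∈ S, c : NNReal) : ℝ) ≤ 1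
  rw [inv_pow, Real.sq_sqrt (by positivity), sum_const, nsmul_eq_mul, NNReal.coe_mul,
    NNReal.coe_natCast, mul_comm (#S : ℝ)]
  exact inv_mul_le_one

end NoiseLevel

section IccSumLevel

open Finset

/-- For finite `γ`, the square of the smallest `G ≥ 0` for which `IccSumBound G e` holds. Division
by zero is harmless here, as the sum over an empty interval vanishes. -/
def iccSumLevel {γ : Type*} [Preorder γ] [LocallyFiniteOrder γ] (e : γ → ℝ) : ℝ :=
  ⨆ r : γ × γ, (∑ x ∈ Icc r.1 r.2, e x) ^ 2 / #(Icc r.1 r.2)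

variable {γ : Type*} [Preorder γ] [LocallyFiniteOrder γ]

lemma iccSumLevel_nonneg (e : γ → ℝ) : 0 ≤ iccSumLevel e :=
  Real.iSup_nonneg fun _ => by positivity

lemma iccSumBound_sqrt_iccSumLevel [Finite γ] (e : γ → ℝ) :
    IccSumBound (√(iccSumLevel e)) e := fun p q => by
  rw [← Real.sqrt_mul (iccSumLevel_nonneg e)]
  refine Real.abs_le_sqrt ?_
  obtain h | h := (Icc p q).eq_empty_or_nonempty
  · simp [h]
  · rw [← div_le_iff₀ (Nat.cast_pos.2 h.card_pos)]
    exact le_ciSup (f := fun r : γ × γ => (∑ x ∈ Icc r.1 r.2, e x) ^ 2 / #(Icc r.1 r.2))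
      (Set.finite_range _).bddAbove (p, q)

lemma iccSumLevel_eq_mul_iSup {c : NNReal} (hc : c ≠ 0) (e : γ → ℝ) :
    iccSumLevel e =
      c * ⨆ r : γ × γ, ((√(c * #(Icc r.1 r.2)))⁻¹ * ∑ x ∈ Icc r.1 r.2, e x) ^ 2 := by
  rw [Real.mul_iSup_of_nonneg c.coe_nonneg]
  refine iSup_congr fun r => ?_
  have : (c : ℝ) ≠ 0 := NNReal.coe_ne_zero.2 hc
  rw [mul_pow, inv_pow, Real.sq_sqrt (by positivity), mul_inv, div_eq_inv_mul]
  field_simp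

variable {Ω : Type*} [MeasurableSpace Ω] {P : Measure Ω} {X : γ → Ω → ℝ} {c : NNReal}

lemma integrable_iccSumLevel [Finite γ] (hX : iIndepFun X P)
    (hc : ∀ x, HasSubgaussianMGF (X x) c P) (hc0 : c ≠ 0) :
    Integrable (fun ω => iccSumLevel fun x => X x ω) P := by
  have := hX.isProbabilityMeasure
  choose v _ hv using fun r : γ × γ => hasSubgaussianMGF_sum_div_sqrt_card hX hc (Icc r.1 r.2)
  simp only [iccSumLevel_eq_mul_iSup hc0]
  exact (integrable_iSup_sq_of_hasSubgaussianMGF hv).const_mul _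

lemma integral_iccSumLevel_le [Fintype γ] (hX : iIndepFun X P)
    (hc : ∀ x, HasSubgaussianMGF (X x) c P) (hc0 : c ≠ 0) :
    ∫ ω, iccSumLevel (fun x => X x ω) ∂P ≤
      c * (2 * Real.log (Fintype.card (γ × γ)) ^ 2 + 32) := by
  have := hX.isProbabilityMeasure
  choose v hv1 hv using
    fun r : γ × γ => hasSubgaussianMGF_sum_div_sqrt_card hX hc (Icc r.1 r.2)
  simp only [iccSumLevel_eq_mul_iSup hc0]
  rw [integral_const_mul]
  gcongr
  exact integral_iSup_sq_le_of_hasSubgaussianMGF hv hv1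

end IccSumLevel

section GaussianNoise

section

variable {ι κ Ω : Type*} [Fintype ι] [Fintype κ] [MeasurableSpace Ω]
  (μ : Measure Ω) [IsProbabilityMeasure μ]

lemma iIndepFun_pi_pi :
    iIndepFun (fun (p : ι × κ) (ω : ι → κ → Ω) => ω p.1 p.2)
      (Measure.pi fun _ => Measure.pi fun _ => μ) := by
  simp only [← Measure.infinitePi_eq_pi]
  exact iIndepFun_uncurry_infinitePi' (X := fun _ _ x => x) (fun _ _ => μ)
    fun _ _ => measurable_id

lemma measurePreserving_eval_eval (i : ι) (j : κ) :
    MeasurePreserving (fun ω : ι → κ → Ω => ω i j)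
      (Measure.pi fun _ => Measure.pi fun _ => μ) μ :=
  (measurePreserving_eval (fun _ => μ) j).comp
    (measurePreserving_eval (fun _ => Measure.pi fun _ => μ) i)

end

lemma hasSubgaussianMGF_id_gaussianReal (v : NNReal) :
    HasSubgaussianMGF id v (gaussianReal 0 v) where
  integrable_exp_mul := integrable_exp_mul_gaussianReal
  mgf_le t := by simp [mgf_id_gaussianReal]

variable {n1 n2 : ℕ} {σ : ℝ}

lemma iIndepFun_noiseMeasure :
    iIndepFun (fun (p : Fin n1 × Fin n2) (ε : Fin n1 → Fin n2 → ℝ) => ε p.1 p.2)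
      (noiseMeasure n1 n2 σ) :=
  iIndepFun_pi_pi (gaussianReal 0 (.mk (σ ^ 2) (sq_nonneg σ)))

lemma hasSubgaussianMGF_noiseMeasure (p : Fin n1 × Fin n2) :
    HasSubgaussianMGF (fun ε : Fin n1 → Fin n2 → ℝ => ε p.1 p.2) (.mk (σ ^ 2) (sq_nonneg σ))
      (noiseMeasure n1 n2 σ) := by
  have hp := measurePreserving_eval_eval (gaussianReal 0 (.mk (σ ^ 2) (sq_nonneg σ))) p.1 p.2
  exact .of_map hp.aemeasurable (hp.map_eq.symm ▸ hasSubgaussianMGF_id_gaussianReal _)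

end GaussianNoise

section Projection

lemma norm_sub_sq_le_of_forall_norm_sub_le {E : Type*} [NormedAddCommGroup E]
    [InnerProductSpace ℝ E] {K : Set E} (hK : Convex ℝ K) {y u v : E} (hv : v ∈ K) (hu : u ∈ K)
    (hmin : ∀ w ∈ K, ‖y - v‖ ≤ ‖y - w‖) (x : E) :
    ‖v - x‖ ^ 2 ≤ ‖x - u‖ ^ 2 + (2 * inner ℝ (y - x) (v - u) - ‖v - u‖ ^ 2) := by
  have : Nonempty K := ⟨⟨v, hv⟩⟩
  have hbdd : BddBelow (Set.range fun w : K => ‖y - w‖) :=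
    ⟨0, Set.forall_mem_range.2 fun _ => norm_nonneg _⟩
  have hinf : ‖y - v‖ = ⨅ w : K, ‖y - w‖ :=
    le_antisymm (le_ciInf fun w => hmin w w.2) (ciInf_le hbdd ⟨v, hv⟩)
  have hangle : inner ℝ (y - v) (u - v) ≤ 0 :=
    (norm_eq_iInf_iff_real_inner_le_zero hK hv).1 hinf u hu
  have hexpand : ‖x - u‖ ^ 2 + (2 * inner ℝ (y - x) (v - u) - ‖v - u‖ ^ 2) =
      ‖v - x‖ ^ 2 - 2 * inner ℝ (y - v) (u - v) := by
    simp only [← real_inner_self_eq_norm_sq, inner_sub_left, inner_sub_right,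
      real_inner_comm u x, real_inner_comm v x, real_inner_comm u v]
    ring
  linarith

variable {n1 n2 : ℕ}

lemma isotonic_iff_monotone_uncurry {θ : Fin n1 → Fin n2 → ℝ} :
    Isotonic θ ↔ Monotone (Function.uncurry θ) :=
  ⟨fun h _ _ hpq => h hpq.1 hpq.2, fun h _ _ _ _ hik hjl => h (Prod.mk_le_mk.2 ⟨hik, hjl⟩)⟩

lemma frobSq_eq_norm_sq (θ : Fin n1 → Fin n2 → ℝ) :
    frobSq θ = ‖WithLp.toLp 2 (Function.uncurry θ)‖ ^ 2 := by
  rw [EuclideanSpace.real_norm_sq_eq, Fintype.sum_prod_type, frobSq]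
  rfl

lemma frobSq_nonneg (θ : Fin n1 → Fin n2 → ℝ) : 0 ≤ frobSq θ :=
  (sq_nonneg _).trans_eq (frobSq_eq_norm_sq θ).symm

lemma convex_setOf_monotone_ofLp (γ : Type*) [Preorder γ] :
    Convex ℝ {w : EuclideanSpace ℝ γ | Monotone w.ofLp} :=
  fun _ hv _ hw _ _ ha hb _ => (hv.const_mul ha).add (hw.const_mul hb)

lemma IsLSE.norm_sub_le {lse : (Fin n1 → Fin n2 → ℝ) → Fin n1 → Fin n2 → ℝ} (h : IsLSE lse)
    (y : Fin n1 → Fin n2 → ℝ) {w : EuclideanSpace ℝ (Fin n1 × Fin n2)} (hw : Monotone w.ofLp) :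
    ‖WithLp.toLp 2 (Function.uncurry y) - WithLp.toLp 2 (Function.uncurry (lse y))‖ ≤
      ‖WithLp.toLp 2 (Function.uncurry y) - w‖ := by
  have hy := (h y).2 (Function.curry w.ofLp)
    (isotonic_iff_monotone_uncurry.2 (by rwa [Function.uncurry_curry]))
  rw [frobSq_eq_norm_sq, frobSq_eq_norm_sq] at hy
  exact (pow_le_pow_iff_left₀ (norm_nonneg _) (norm_nonneg _) two_ne_zero).1 hy

lemma IsLSE.frobSq_sub_le {lse : (Fin n1 → Fin n2 → ℝ) → Fin n1 → Fin n2 → ℝ} (h : IsLSE lse)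
    (θstar ε : Fin n1 → Fin n2 → ℝ) {u : Fin n1 → Fin n2 → ℝ} (hu : Isotonic u) :
    frobSq (lse (θstar + ε) - θstar) ≤ frobSq (θstar - u) +
      ∑ p : Fin n1 × Fin n2, (2 * ε p.1 p.2 * (lse (θstar + ε) p.1 p.2 - u p.1 p.2) -
        (lse (θstar + ε) p.1 p.2 - u p.1 p.2) ^ 2) := by
  have hproj := norm_sub_sq_le_of_forall_norm_sub_le (convex_setOf_monotone_ofLp (Fin n1 × Fin n2))
    (y := WithLp.toLp 2 (Function.uncurry (θstar + ε)))
    (v := WithLp.toLp 2 (Function.uncurry (lse (θstar + ε))))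
    (u := WithLp.toLp 2 (Function.uncurry u))
    (isotonic_iff_monotone_uncurry.1 (h (θstar + ε)).1) (isotonic_iff_monotone_uncurry.1 hu)
    (fun w hw => h.norm_sub_le (θstar + ε) hw) (WithLp.toLp 2 (Function.uncurry θstar))
  rw [frobSq_eq_norm_sq, frobSq_eq_norm_sq]
  refine hproj.trans_eq (congrArg _ ?_)
  rw [EuclideanSpace.real_norm_sq_eq, PiLp.inner_apply, Finset.mul_sum, ← Finset.sum_sub_distrib]
  refine Finset.sum_congr rfl fun p _ => ?_
  simp only [PiLp.sub_apply, Function.uncurry, Pi.add_apply, add_sub_cancel_left,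
    RCLike.inner_apply, Real.ringHom_apply]
  ring

end Projection

section LogBounds

lemma natLog_two_le_two_mul_log (m : ℕ) : (Nat.log 2 m : ℝ) ≤ 2 * Real.log m := by
  have h := Real.natLog_le_logb m 2
  rw [Real.logb, Nat.cast_two] at h
  refine h.trans (div_le_of_le_mul₀ (by positivity) (by positivity) ?_)
  nlinarith [Real.log_two_gt_d9, Real.log_natCast_nonneg m]

lemma log_one_add_sqrt_le {x : ℝ} (hx : 4 ≤ x) : Real.log (1 + √x) ≤ Real.log x := by
  have hsq : √x ^ 2 = x := Real.sq_sqrt (by linarith)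
  have htwo : 2 ≤ √x := Real.le_sqrt_of_sq_le (by linarith)
  exact Real.log_le_log (by positivity) (by nlinarith)

lemma one_le_log_of_four_le {x : ℝ} (hx : 4 ≤ x) : 1 ≤ Real.log x := by
  rw [Real.le_log_iff_exp_le (by linarith)]
  linarith [Real.exp_one_lt_d9]

end LogBounds

section Oracle

variable {n1 n2 : ℕ} {σ : ℝ} {lse : (Fin n1 → Fin n2 → ℝ) → Fin n1 → Fin n2 → ℝ}

lemma four_le_mul_of_one_lt (h1 : 1 < n1) (h2 : 1 < n2) : (4 : ℝ) ≤ n1 * n2 := by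
  exact_mod_cast Nat.mul_le_mul h1 h2

lemma lt_two_pow_log_mul (h2 : 1 < n2) : n1 < 2 ^ Nat.log 2 (n1 * n2) := by
  have h := Nat.lt_pow_succ_log_self one_lt_two (n1 * n2)
  rw [pow_succ] at h
  exact lt_of_mul_lt_mul_right ((Nat.mul_le_mul_left n1 h2).trans_lt h) zero_le_two

lemma IsLSE.frobSq_sub_le_add_iccSumLevel (h1 : 1 < n1) (h2 : 1 < n2) (h : IsLSE lse)
    (θstar ε : Fin n1 → Fin n2 → ℝ) {θ : Fin n1 → ℝ} (hθ : Monotone θ) :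
    frobSq (lse (θstar + ε) - θstar) ≤ frobSq (fun i j => θstar i j - θ i) +
      kVec θ * (128 * Real.log (n1 * n2) ^ 6) * iccSumLevel (Function.uncurry ε) := by
  set ℓ := Real.log (n1 * n2)
  set G := √(iccSumLevel (Function.uncurry ε))
  have hN := four_le_mul_of_one_lt h1 h2
  have hL : (Nat.log 2 (n1 * n2) : ℝ) ≤ 2 * ℓ := by
    simpa only [Nat.cast_mul] using natLog_two_le_two_mul_log (n1 * n2)
  have hlog : Real.log (1 + √(n1 * n2)) ≤ ℓ := log_one_add_sqrt_le hN
  have hlog0 : 0 ≤ Real.log (1 + √(n1 * n2)) :=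
    Real.log_nonneg (le_add_of_nonneg_right (Real.sqrt_nonneg _))
  have : 0 ≤ ℓ := hlog0.trans hlog
  refine (h.frobSq_sub_le θstar ε (u := fun i _ => θ i) fun i k _ _ hik _ => hθ hik).trans
    (add_le_add_right ?_ _)
  calc _ ≤ kVec θ * (2 * (G * Nat.log 2 (n1 * n2) ^ 2 *
          (2 * Real.log (1 + √(n1 * n2)))) ^ 2) :=
        (iccSumBound_sqrt_iccSumLevel _).sum_two_mul_sub_sq_le_card_image (Real.sqrt_nonneg _)
          (by simpa using lt_two_pow_log_mul h2) (by simp) (by linarith)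
          (isotonic_iff_monotone_uncurry.1 (h (θstar + ε)).1) hθ
    _ ≤ kVec θ * (2 * (G * (2 * ℓ) ^ 2 * (2 * ℓ)) ^ 2) := by gcongr
    _ = kVec θ * (128 * ℓ ^ 6) * G ^ 2 := by ring
    _ = kVec θ * (128 * ℓ ^ 6) * iccSumLevel (Function.uncurry ε) := by
        rw [Real.sq_sqrt (iccSumLevel_nonneg _)]

lemma integrable_iccSumLevel_noiseMeasure (hσ : 0 < σ) :
    Integrable (fun ε => iccSumLevel (Function.uncurry ε)) (noiseMeasure n1 n2 σ) :=
  integrable_iccSumLevel iIndepFun_noiseMeasure hasSubgaussianMGF_noiseMeasure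
    (NNReal.coe_ne_zero.1 (pow_pos hσ 2).ne')

lemma integral_iccSumLevel_noiseMeasure_le (h1 : 1 < n1) (h2 : 1 < n2) (hσ : 0 < σ) :
    ∫ ε, iccSumLevel (Function.uncurry ε) ∂noiseMeasure n1 n2 σ ≤
      σ ^ 2 * (40 * Real.log (n1 * n2) ^ 2) := by
  refine (integral_iccSumLevel_le iIndepFun_noiseMeasure hasSubgaussianMGF_noiseMeasure
    (NNReal.coe_ne_zero.1 (pow_pos hσ 2).ne')).trans
      (mul_le_mul_of_nonneg_left ?_ (sq_nonneg σ))
  have hcard : Real.log (Fintype.card ((Fin n1 × Fin n2) × (Fin n1 × Fin n2))) =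
      2 * Real.log (n1 * n2) := by
    simp only [Fintype.card_prod, Fintype.card_fin, Nat.cast_mul, ← sq, Nat.cast_pow, Real.log_pow,
      Nat.cast_two]
  rw [hcard]
  nlinarith [one_le_log_of_four_le (four_le_mul_of_one_lt h1 h2)]

lemma IsLSE.integral_frobSq_sub_le (h1 : 1 < n1) (h2 : 1 < n2) (hσ : 0 < σ) (h : IsLSE lse)
    (θstar : Fin n1 → Fin n2 → ℝ) {θ : Fin n1 → ℝ} (hθ : Monotone θ) :
    ∫ ε, frobSq (lse (θstar + ε) - θstar) ∂noiseMeasure n1 n2 σ ≤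
      frobSq (fun i j => θstar i j - θ i) +
        5120 * kVec θ * σ ^ 2 * Real.log (n1 * n2) ^ 8 := by
  set ℓ := Real.log (n1 * n2)
  set K : ℝ := kVec θ * (128 * ℓ ^ 6)
  have hint := (integrable_iccSumLevel_noiseMeasure (n1 := n1) (n2 := n2) hσ).const_mul K
  have := (iIndepFun_noiseMeasure (n1 := n1) (n2 := n2) (σ := σ)).isProbabilityMeasure
  calc _ ≤ ∫ ε, (frobSq (fun i j => θstar i j - θ i) + K * iccSumLevel (Function.uncurry ε))
          ∂noiseMeasure n1 n2 σ :=
        integral_mono_of_nonneg (.of_forall fun _ => frobSq_nonneg _)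
          ((integrable_const _).add hint)
          (.of_forall fun ε => h.frobSq_sub_le_add_iccSumLevel h1 h2 θstar ε hθ)
    _ = frobSq (fun i j => θstar i j - θ i) +
          K * ∫ ε, iccSumLevel (Function.uncurry ε) ∂noiseMeasure n1 n2 σ := by
        rw [integral_add (integrable_const _) hint, integral_const, probReal_univ, one_smul,
          integral_const_mul]
    _ ≤ frobSq (fun i j => θstar i j - θ i) + K * (σ ^ 2 * (40 * ℓ ^ 2)) := by
        gcongr
        exact integral_iccSumLevel_noiseMeasure_le h1 h2 hσ
    _ = frobSq (fun i j => θstar i j - θ i) + 5120 * kVec θ * σ ^ 2 * ℓ ^ 8 := by ring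

lemma frobSq_row_const (a : Fin n1 → ℝ) :
    frobSq (fun i (_ : Fin n2) => a i) = n2 * ∑ i, a i ^ 2 := by
  simp [frobSq, Finset.mul_sum]

end Oracle

theorem isotonic_lse_variable_adaptation_oracle_general :
    ∃ C : ℝ, 0 < C ∧
      ∀ (n1 n2 : ℕ), 1 < n1 → 1 < n2 → ∀ σ : ℝ, 0 < σ →
        ∀ θstar : Fin n1 → Fin n2 → ℝ, ∀ lse, IsLSE lse →
          ∀ θ : Fin n1 → ℝ, Monotone θ →
            risk σ θstar lse ≤
              frobSq (fun i j => θstar i j - θ i) / (n1 * n2) +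
                C * kVec θ * σ ^ 2 * Real.log (n1 * n2) ^ 8 / (n1 * n2) := by
  refine ⟨5120, by norm_num, fun n1 n2 h1 h2 σ hσ θstar lse hlse θ hθ => ?_⟩
  rw [risk, ← add_div]
  gcongr
  exact hlse.integral_frobSq_sub_le h1 h2 hσ θstar hθ

/-- **Theorem 4, inequality (vara1) (variable adaptation, oracle form).** There is a
universal constant `C > 0` such that if the isotonic matrix `θ*` is constant along
each row, i.e. `θ*_{ij} = θ*_i` for a nondecreasing vector `θ* ∈ C_{n1}`, then for
every nondecreasing vector `θ ∈ C_{n1}`,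
`R(θ*, θ̂) ≤ ‖θ*vec − θ‖²/n1 + C k(θ) σ² (log n)⁸ / n` with `n = n1 n2`. -/
theorem isotonic_lse_variable_adaptation_oracle :
    ∃ C : ℝ, 0 < C ∧
      ∀ (n1 n2 : ℕ), 1 < n1 → 1 < n2 → ∀ σ : ℝ, 0 < σ →
        ∀ θstar : Fin n1 → Fin n2 → ℝ, Isotonic θstar →
          ∀ θstarVec : Fin n1 → ℝ, Monotone θstarVec →
            (∀ i j, θstar i j = θstarVec i) →
            ∀ lse, IsLSE lse →
              ∀ θ : Fin n1 → ℝ, Monotone θ →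
                risk σ θstar lse ≤
                  (∑ i, (θstarVec i - θ i) ^ 2) / n1 +
                    C * kVec θ * σ ^ 2 * Real.log (n1 * n2) ^ 8 / (n1 * n2) := by
  obtain ⟨C, hC, horacle⟩ := isotonic_lse_variable_adaptation_oracle_general
  refine ⟨C, hC, fun n1 n2 h1 h2 σ hσ θstar _ θstarVec _ hrow lse hlse θ hθ => ?_⟩
  have hn2 : (n2 : ℝ) ≠ 0 := Nat.cast_ne_zero.2 (by omega)
  have h := horacle n1 n2 h1 h2 σ hσ θstar lse hlse θ hθ
  simp only [hrow] at h
  rwa [frobSq_row_const, mul_comm (n1 : ℝ), mul_div_mul_left _ _ hn2, mul_comm (n2 : ℝ)] at h
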